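/- A net of conics V has smooth discriminant if and only if V is equivalent to span{YZ−X², (Y−Z)(Y−αZ), XY} for some α ∈ k with α ≠ 0 and α ≠ 1. -/

import Mathlib

/-!
By Jacobi's formula the differential of `det` at a matrix `A` is `B ↦ tr (adj A * B)`. So the
discriminant of a net is smooth if and only if the space `W` of its matrices of second derivatives
contains no `A ≠ 0` with `tr (adj A * B) = 0` for all `B ∈ W`. This condition (`SmoothMat`) involves
no basis and is invariant under the congruences `A ↦ gᵀ A g`, which are the effect on `W` of linear
substitutions of the variables.

Let `W` be smooth. The discriminant cubic and its Hessian have a common nonzero zero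
(`exists_common_zero`, from Krull's height theorem and the Nullstellensatz), so the cubic has a flex
`P`: `det P = 0`, and the second differential of `det` at `P` has a nonzero radical vector `U` in
`W` (`exists_flex`). Smoothness gives `adj P ≠ 0`, so `P` is a pair of distinct lines, and is `XY`
in suitable coordinates. Evaluating the second differential at `XY` on the pairs `(U, P)` and
`(U, U)` shows that the conic `U` passes through the vertex `(0 : 0 : 1)` of `XY` and is tangent
there to one of the two lines (`hasNF_of_matE`). Some conic of the net does not pass through the
vertex, since otherwise `XY` would be a singular point of the discriminant. Smoothness excludes the
degenerate cases, and completing squares turns `U` into a multiple of `YZ - X²` (after rescaling)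
and the third conic into a binary form in `Y, Z` with nonzero coefficients of `Y²` and `Z²`; scaling
`Z` makes `Y - Z` one of its factors, and then it is a multiple of `(Y - Z)(Y - αZ)`.

Conversely, the discriminant of the net `⟨YZ - X², (Y - Z)(Y - αZ), XY⟩` is the cubic
`2xt² - 8αxy² - 2αyz²` with `t = x - (1 + α) y`, which is smooth exactly for `α ≠ 0, 1`
(`smoothMat_normal_form`). This also supplies the condition on `α` in the first part.
-/

open MvPolynomial

noncomputable section

namespace Conics

/-- The action of a `3 × 3` matrix on polynomials in `X, Y, Z` by linear
substitution of the variables. -/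
def subst {k : Type} [Field k] (g : Matrix (Fin 3) (Fin 3) k) :
    MvPolynomial (Fin 3) k →ₐ[k] MvPolynomial (Fin 3) k :=
  aeval fun i => ∑ j, C (g i j) * X j

/-- Two subspaces of the polynomial ring are equivalent if some invertible linear
substitution of the variables maps one onto the other. -/
def Equivalent {k : Type} [Field k]
    (E E' : Submodule k (MvPolynomial (Fin 3) k)) : Prop :=
  ∃ g : Matrix (Fin 3) (Fin 3) k, IsUnit g ∧
    Submodule.map (subst g).toLinearMap E = E'

/-- A net of conics: a `3`-dimensional subspace of the space `R₂` of
quadratic forms in `X, Y, Z`. -/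
def IsNet {k : Type} [Field k] (V : Submodule k (MvPolynomial (Fin 3) k)) : Prop :=
  V ≤ homogeneousSubmodule (Fin 3) k 2 ∧ Module.finrank k V = 3

/-- The `3 × 3` symmetric matrix of second partial derivatives of a quadratic form. -/
def Mmat {k : Type} [Field k] (q : MvPolynomial (Fin 3) k) : Matrix (Fin 3) (Fin 3) k :=
  Matrix.of fun i j => constantCoeff (pderiv i (pderiv j q))

/-- The discriminant cubic `Γ(a,b,c) = det M(a·v₁ + b·v₂ + c·v₃)` of a triple of
quadratic forms, as a polynomial in the variables `a = X 0`, `b = X 1`, `c = X 2`. -/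
def disc {k : Type} [Field k] (v : Fin 3 → MvPolynomial (Fin 3) k) :
    MvPolynomial (Fin 3) k :=
  Matrix.det (Matrix.of fun i j => ∑ m, X m * C (Mmat (v m) i j))

/-- A polynomial in three variables is smooth (as a projective plane curve) if the only
common zero of its three partial derivatives is the origin. -/
def IsSmooth {k : Type} [Field k] (F : MvPolynomial (Fin 3) k) : Prop :=
  ∀ p : Fin 3 → k, (∀ i, eval p (pderiv i F) = 0) → p = 0

/-- A net of conics has smooth discriminant if the discriminant cubic computed from a
basis is a smooth cubic (a condition independent of the chosen basis). -/
def HasSmoothDiscriminant {k : Type} [Field k]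
    (V : Submodule k (MvPolynomial (Fin 3) k)) : Prop :=
  ∀ v : Fin 3 → MvPolynomial (Fin 3) k, LinearIndependent k v →
    Submodule.span k (Set.range v) = V → IsSmooth (disc v)

/-- The one-parameter family of nets `span{YZ − X², (Y − Z)(Y − αZ), XY}`. -/
def Wnet (k : Type) [Field k] (α : k) : Submodule k (MvPolynomial (Fin 3) k) :=
  Submodule.span k
    {X 1 * X 2 - X 0 ^ 2, (X 1 - X 2) * (X 1 - C α * X 2), X 0 * X 1}

/-! ### Common zeros of two polynomials in three variables -/

/-- If the substitution `b` kills everything that `a` kills, and moreover the variable `X i`, then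
the height of the kernel increases. -/
lemma height_ker_add_one_le {k : Type} [Field k] (a b : Fin 3 → MvPolynomial (Fin 3) k)
    (h : ∀ q, aeval (R := k) a q = 0 → aeval (R := k) b q = 0) (i : Fin 3) (ha : a i ≠ 0)
    (hb : b i = 0) :
    (RingHom.ker (aeval (R := k) a) : Ideal (MvPolynomial (Fin 3) k)).height + 1
      ≤ (RingHom.ker (aeval (R := k) b)).height := by
  have hpa : (RingHom.ker (aeval (R := k) a) : Ideal (MvPolynomial (Fin 3) k)).IsPrime :=
    RingHom.ker_isPrime _
  have hpb : (RingHom.ker (aeval (R := k) b) : Ideal (MvPolynomial (Fin 3) k)).IsPrime :=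
    RingHom.ker_isPrime _
  apply Ideal.height_add_one_le_of_lt_of_isPrime
  refine lt_of_le_of_ne (fun q hq => h q hq) fun he => ha ?_
  have : (X i : MvPolynomial (Fin 3) k) ∈ RingHom.ker (aeval (R := k) a) := by
    rw [he]; simp [RingHom.mem_ker, hb]
  simpa [RingHom.mem_ker] using this

/-- Two polynomials in three variables vanishing at the origin have another common zero. Otherwise,
by the Nullstellensatz, the maximal ideal of the origin would be minimal over an ideal with two
generators, hence of height at most two by Krull; but the chain `0 < (X) < (X, Y) < (X, Y, Z)` shows
that it has height at least three. -/
lemma exists_common_zero {k : Type} [Field k] [IsAlgClosed k] (F G : MvPolynomial (Fin 3) k)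
    (hF : eval 0 F = 0) (hG : eval 0 G = 0) :
    ∃ p : Fin 3 → k, p ≠ 0 ∧ eval p F = 0 ∧ eval p G = 0 := by
  by_contra! hcon
  set I : Ideal (MvPolynomial (Fin 3) k) := Ideal.span {F, G} with hI
  set m : Ideal (MvPolynomial (Fin 3) k) := vanishingIdeal k {(0 : Fin 3 → k)} with hm
  have hz : zeroLocus k I = {0} := by
    ext x
    simp only [hI, zeroLocus_span, Set.mem_ofPred_eq, Set.mem_insert_iff, Set.mem_singleton_iff,
      forall_eq_or_imp, forall_eq, aeval_eq_eval]
    constructor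
    · rintro ⟨h1, h2⟩
      by_contra hx
      exact hcon x hx h1 h2
    · rintro rfl
      exact ⟨hF, hG⟩
  have hrad : I.radical = m := by rw [← vanishingIdeal_zeroLocus_eq_radical (K := k), hz]
  have hmin : m ∈ I.minimalPrimes := by
    rw [← Ideal.radical_minimalPrimes, hrad, Ideal.minimalPrimes_eq_subsingleton_self]
    rfl
  have h2 : m.height ≤ 2 := by
    refine (Ideal.height_le_card_of_mem_minimalPrimes_span (by simp) hmin).trans ?_
    exact_mod_cast (Set.ncard_insert_le F {G}).trans (by simp)
  have hker : m = RingHom.ker (aeval (R := k) ![(0 : MvPolynomial (Fin 3) k), 0, 0]) := by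
    ext q
    have : aeval (R := k) ![(0 : MvPolynomial (Fin 3) k), 0, 0]
        = (Algebra.ofId k _).comp (aeval (0 : Fin 3 → k)) := by
      ext i : 1
      fin_cases i <;> simp
    rw [hm, mem_vanishingIdeal_singleton_iff, RingHom.mem_ker, this, AlgHom.comp_apply,
      Algebra.ofId_apply, algebraMap_eq, C_eq_zero]
  -- The chain of primes, each one the kernel of setting one more variable to zero.
  have e1 := height_ker_add_one_le (k := k) ![X 0, X 1, X 2] ![0, X 1, X 2]
    (fun q hq => by
      have : (![X 0, X 1, X 2] : Fin 3 → MvPolynomial (Fin 3) k) = X := by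
        ext i; fin_cases i <;> simp
      rw [this, aeval_X_left, AlgHom.id_apply] at hq
      simp [hq]) 0 (by simp) (by simp)
  have e2 := height_ker_add_one_le (k := k) ![0, X 1, X 2] ![0, 0, X 2]
    (fun q hq => by
      have := congrArg (aeval (R := k) ![(0 : MvPolynomial (Fin 3) k), 0, X 2]) hq
      rw [← AlgHom.comp_apply, comp_aeval, map_zero] at this
      convert this using 2
      congr 1
      ext1 i; fin_cases i <;> simp) 1 (by simp) (by simp)
  have e3 := height_ker_add_one_le (k := k) ![0, 0, X 2] ![0, 0, 0]
    (fun q hq => by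
      have := congrArg (aeval (R := k) ![(0 : MvPolynomial (Fin 3) k), 0, 0]) hq
      rw [← AlgHom.comp_apply, comp_aeval, map_zero] at this
      convert this using 2
      congr 1
      ext1 i; fin_cases i <;> simp) 2 (by simp) (by simp)
  rw [← hker] at e3
  have h3 : (3 : ℕ∞) ≤ m.height := by
    refine le_trans ?_ ((add_le_add_left ((add_le_add_left e1 1).trans e2) 1).trans e3)
    rw [add_assoc, add_assoc]
    exact le_add_left (by norm_num)
  exact absurd (h3.trans h2) (by norm_num)

section

open Matrix

/-! ### Gram matrices and the basis-free form of smoothness -/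

/-- The action of `g` on Gram matrices: `A ↦ gᵀ A g`. -/
def cong {k : Type} [Field k] (g : Matrix (Fin 3) (Fin 3) k) :
    Matrix (Fin 3) (Fin 3) k →ₗ[k] Matrix (Fin 3) (Fin 3) k where
  toFun A := gᵀ * A * g
  map_add' A B := by rw [mul_add, add_mul]
  map_smul' c A := by simp

lemma cong_apply {k : Type} [Field k] (g A : Matrix (Fin 3) (Fin 3) k) :
    cong g A = gᵀ * A * g := rfl

lemma cong_comp {k : Type} [Field k] (g h : Matrix (Fin 3) (Fin 3) k) :
    (cong g).comp (cong h) = cong (h * g) := by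
  ext1 A
  simp only [LinearMap.comp_apply, cong_apply, transpose_mul, Matrix.mul_assoc]

lemma cong_injective {k : Type} [Field k] {g : Matrix (Fin 3) (Fin 3) k} (hg : IsUnit g) :
    Function.Injective (cong g) := by
  intro A B h
  have hAB : gᵀ * (A * g) = gᵀ * (B * g) := by simpa [cong_apply, Matrix.mul_assoc] using h
  have hgt : IsUnit gᵀ := by
    rw [isUnit_iff_isUnit_det, det_transpose, ← isUnit_iff_isUnit_det]; exact hg
  exact hg.mul_right_cancel (hgt.mul_left_cancel hAB)

/-- Basis-free form of smoothness of the discriminant, for a space `W` of Gram matrices: the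
differential of `det` at `A` is `B ↦ tr (adj A * B)`, and it vanishes on all of `W` only for
`A = 0`. -/
def SmoothMat {k : Type} [Field k] (W : Submodule k (Matrix (Fin 3) (Fin 3) k)) : Prop :=
  ∀ A ∈ W, (∀ B ∈ W, trace (adjugate A * B) = 0) → A = 0

/-- The second polarization of `det` on `3 × 3` matrices: `tr (bil A B * C)` is the coefficient
of `s * t` in `det (C + s A + t B)`. -/
def bil {R : Type} [CommRing R] (A B : Matrix (Fin 3) (Fin 3) R) : Matrix (Fin 3) (Fin 3) R :=
  adjugate (A + B) - adjugate A - adjugate B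

lemma trace_cong {k : Type} [Field k] (g M B : Matrix (Fin 3) (Fin 3) k) :
    trace (adjugate g * M * adjugate gᵀ * cong g B) = det g ^ 2 * trace (M * B) := by
  have h1 : adjugate g * M * adjugate gᵀ * cong g B
      = adjugate g * ((M * (adjugate gᵀ * gᵀ) * B) * g) := by
    simp only [cong_apply, Matrix.mul_assoc]
  rw [h1, trace_mul_comm, Matrix.mul_assoc, mul_adjugate, adjugate_mul, det_transpose]
  simp
  ring

lemma adjugate_cong {k : Type} [Field k] (g A : Matrix (Fin 3) (Fin 3) k) :
    adjugate (cong g A) = adjugate g * adjugate A * adjugate gᵀ := by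
  rw [cong_apply, adjugate_mul_distrib, adjugate_mul_distrib, Matrix.mul_assoc]

lemma bil_cong {k : Type} [Field k] (g A B : Matrix (Fin 3) (Fin 3) k) :
    bil (cong g A) (cong g B) = adjugate g * bil A B * adjugate gᵀ := by
  rw [bil, ← map_add, adjugate_cong, adjugate_cong, adjugate_cong, bil]
  simp only [mul_sub, sub_mul]

lemma det_ne_zero_of_isUnit {k : Type} [Field k] {g : Matrix (Fin 3) (Fin 3) k}
    (hg : IsUnit g) : det g ≠ 0 :=
  ((isUnit_iff_isUnit_det g).1 hg).ne_zero

/-- Smoothness of the discriminant is invariant under coordinate changes. -/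
lemma smoothMat_map_cong {k : Type} [Field k] {W : Submodule k (Matrix (Fin 3) (Fin 3) k)}
    {g : Matrix (Fin 3) (Fin 3) k} (hg : IsUnit g) :
    SmoothMat (W.map (cong g)) ↔ SmoothMat W := by
  have hd := det_ne_zero_of_isUnit hg
  simp only [SmoothMat, Submodule.mem_map, forall_exists_index, and_imp,
    forall_apply_eq_imp_iff₂, adjugate_cong, trace_cong]
  refine forall₂_congr fun A hA => ?_
  simp [hd, (map_eq_zero_iff _ (cong_injective hg))]

/-- A three-dimensional space of symmetric matrices whose discriminant is smooth. -/
structure SmoothNet {k : Type} [Field k] (W : Submodule k (Matrix (Fin 3) (Fin 3) k)) : Prop where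
  symm : ∀ A ∈ W, Aᵀ = A
  finrank : Module.finrank k W = 3
  smooth : SmoothMat W

lemma SmoothNet.map_cong {k : Type} [Field k] {W : Submodule k (Matrix (Fin 3) (Fin 3) k)}
    (hW : SmoothNet W) {g : Matrix (Fin 3) (Fin 3) k} (hg : IsUnit g) :
    SmoothNet (W.map (cong g)) where
  symm := by
    rintro _ ⟨A, hA, rfl⟩
    simp [cong_apply, Matrix.mul_assoc, hW.symm A hA]
  finrank := by
    exact (Submodule.equivMapOfInjective _ (cong_injective hg) W).finrank_eq.symm.trans hW.finrank
  smooth := (smoothMat_map_cong hg).2 hW.smooth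

/-- The matrix of second derivatives of `XY`. -/
def matE (k : Type) [Field k] : Matrix (Fin 3) (Fin 3) k := !![0, 1, 0; 1, 0, 0; 0, 0, 0]

/-- The matrix of second derivatives of `YZ - X²`. -/
def matU (k : Type) [Field k] : Matrix (Fin 3) (Fin 3) k := !![-2, 0, 0; 0, 0, 1; 0, 1, 0]

/-- The matrix of second derivatives of `(Y - Z)(Y - αZ)`. -/
def matB {k : Type} [Field k] (α : k) : Matrix (Fin 3) (Fin 3) k :=
  !![0, 0, 0; 0, 2, -(1 + α); 0, -(1 + α), 2 * α]

/-- After a change of coordinates, `W` contains the Gram matrices of the three generators of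
`Wnet k α`, for some `α`. -/
def HasNF {k : Type} [Field k] (W : Submodule k (Matrix (Fin 3) (Fin 3) k)) : Prop :=
  ∃ (α : k) (g : Matrix (Fin 3) (Fin 3) k), IsUnit g ∧
    matU k ∈ W.map (cong g) ∧ matB α ∈ W.map (cong g) ∧ matE k ∈ W.map (cong g)

lemma HasNF.of_map_cong {k : Type} [Field k] {W : Submodule k (Matrix (Fin 3) (Fin 3) k)}
    {h : Matrix (Fin 3) (Fin 3) k} (hh : IsUnit h) (H : HasNF (W.map (cong h))) : HasNF W := by
  obtain ⟨α, g, hg, H⟩ := H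
  rw [← Submodule.map_comp, cong_comp] at H
  exact ⟨α, h * g, hh.mul hg, H⟩

/-! ### Normalizing the coordinates at a flex -/

/-- Three independent elements of a three-dimensional space span it. -/
lemma exists_coords {k : Type} [Field k] {W : Submodule k (Matrix (Fin 3) (Fin 3) k)}
    (hW : Module.finrank k W = 3) {P U B : Matrix (Fin 3) (Fin 3) k}
    (hP : P ∈ W) (hU : U ∈ W) (hB : B ∈ W)
    (hli : ∀ x y z : k, x • P + y • U + z • B = 0 → x = 0 ∧ y = 0 ∧ z = 0)
    (A : Matrix (Fin 3) (Fin 3) k) (hA : A ∈ W) :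
    ∃ x y z : k, A = x • P + y • U + z • B := by
  have hl : LinearIndependent k ![P, U, B] := by
    rw [Fintype.linearIndependent_iff]
    intro c hc
    simp only [Fin.sum_univ_three] at hc
    obtain ⟨h0, h1, h2⟩ := hli _ _ _ hc
    intro i
    fin_cases i <;> assumption
  have hle : Submodule.span k (Set.range ![P, U, B]) ≤ W := by
    rw [Submodule.span_le]
    rintro _ ⟨i, rfl⟩
    fin_cases i <;> assumption
  have heq := Submodule.eq_of_le_of_finrank_eq hle (by
    rw [finrank_span_eq_card hl, hW]; rfl)
  rw [← heq] at hA
  obtain ⟨c, hc⟩ := (Submodule.mem_span_range_iff_exists_fun k).1 hA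
  refine ⟨c 0, c 1, c 2, ?_⟩
  rw [← hc, Fin.sum_univ_three]
  rfl

/-- The net spanned by `XY`, `aX² + 2eYZ` and a binary form in `Y, Z`: rescaling the variables
brings it to the normal form. -/
lemma hasNF_of_binary {k : Type} [Field k] [IsAlgClosed k] [CharZero k]
    {W : Submodule k (Matrix (Fin 3) (Fin 3) k)} (hW : SmoothNet W) (hE : matE k ∈ W)
    {a e b f c : k} (ha : a ≠ 0) (he : e ≠ 0) (hc : c ≠ 0)
    (hU : !![a, 0, 0; 0, 0, e; 0, e, 0] ∈ W) (hB : !![0, 0, 0; 0, b, f; 0, f, c] ∈ W) :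
    HasNF W := by
  have hb : b ≠ 0 := by
    rintro rfl
    -- For `b = 0`, `(0 : 1 : 0)` is a base point and this member of the net is singular there.
    have hC : !![-(f * a), 0, 0; 0, 0, 0; 0, 0, e * c] = 0 := by
      refine hW.smooth _ ?_ fun A hA => ?_
      · convert W.sub_mem (W.smul_mem e hB) (W.smul_mem f hU) using 1
        ext i j
        fin_cases i <;> fin_cases j <;> simp [mul_comm]
      · obtain ⟨x, y, z, rfl⟩ := exists_coords hW.finrank hE hU hB (by
          intro x y z h
          have h1 := congrFun (congrFun h 0) 1
          have h2 := congrFun (congrFun h 0) 0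
          have h3 := congrFun (congrFun h 2) 2
          simp [matE, ha, hc] at h1 h2 h3
          exact ⟨h1, h2, h3⟩) A hA
        simp [adjugate_fin_three_of, trace_fin_three, matE]
    have := congrFun (congrFun hC 2) 2
    simp [he, hc] at this
  obtain ⟨z, hz⟩ := IsAlgClosed.exists_eq_mul_self (f ^ 2 - b * c)
  obtain ⟨z, hz⟩ : ∃ z : k, c * z ^ 2 + 2 * f * z + b = 0 :=
    ⟨(-f + z) / c, by field_simp; linear_combination -hz⟩
  have hz0 : z ≠ 0 := by
    rintro rfl
    simp [hb] at hz
  obtain ⟨x, hx⟩ := IsAlgClosed.exists_eq_mul_self (-2 * e * z / a)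
  have hx' : a * (x * x) = -2 * e * z := by rw [← hx]; field_simp
  have hx0 : x ≠ 0 := by
    rintro rfl
    simp [he, hz0] at hx'
  refine ⟨c * z ^ 2 / b, !![x, 0, 0; 0, 1, 0; 0, 0, z], ?_, ?_, ?_, ?_⟩
  · rw [isUnit_iff_isUnit_det, det_fin_three]
    simp [hx0, hz0]
  · refine ⟨_, W.smul_mem (1 / (e * z)) hU, ?_⟩
    rw [map_smul, cong_apply, matU]
    ext i j
    fin_cases i <;> fin_cases j <;> simp [Matrix.mul_apply, Fin.sum_univ_three]
    all_goals field_simp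
    linear_combination hx'
  · refine ⟨_, W.smul_mem (2 / b) hB, ?_⟩
    rw [map_smul, cong_apply, matB]
    ext i j
    fin_cases i <;> fin_cases j <;> simp [Matrix.mul_apply, Fin.sum_univ_three]
    all_goals field_simp
    all_goals linear_combination hz
  · refine ⟨_, W.smul_mem (1 / x) hE, ?_⟩
    rw [map_smul, cong_apply, matE]
    ext i j
    fin_cases i <;> fin_cases j <;> simp [Matrix.mul_apply, Fin.sum_univ_three, hx0]

/-- The net contains `XY`, a conic tangent to `Y = 0` at the vertex of `XY`, and a conic not
passing through that vertex. -/
lemma hasNF_of_tangent {k : Type} [Field k] [IsAlgClosed k] [CharZero k]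
    {W : Submodule k (Matrix (Fin 3) (Fin 3) k)} (hW : SmoothNet W) (hE : matE k ∈ W)
    {a b e a' b' c' d' e' : k} (hU : !![a, 0, 0; 0, b, e; 0, e, 0] ∈ W)
    (hU0 : !![a, 0, 0; 0, b, e; 0, e, 0] ≠ 0) (hc : c' ≠ 0)
    (hB : !![a', 0, d'; 0, b', e'; d', e', c'] ∈ W) : HasNF W := by
  have he : e ≠ 0 := by
    rintro rfl
    -- Otherwise the pencil of `aX² + bY²` and `XY` contains the square of a line.
    obtain ⟨t, ht⟩ := IsAlgClosed.exists_eq_mul_self (a * b)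
    have h0 : !![a, t, 0; t, b, 0; 0, 0, 0] = 0 := by
      refine hW.smooth _ ?_ fun A hA => ?_
      · convert W.add_mem hU (W.smul_mem t hE) using 1
        ext i j
        fin_cases i <;> fin_cases j <;> simp [matE]
      · simp [adjugate_fin_three_of, trace_fin_three, vecMul, dotProduct, Fin.sum_univ_three]
        left
        linear_combination ht
    apply hU0
    have h1 := congrFun (congrFun h0 0) 0
    have h2 := congrFun (congrFun h0 1) 1
    simp at h1 h2
    ext i j
    fin_cases i <;> fin_cases j <;> simp [h1, h2]
  have ha : a ≠ 0 := by
    rintro rfl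
    -- Otherwise the net has a base point on `Y = 0`, where a line pair of the net is singular.
    obtain ⟨s, hs⟩ := IsAlgClosed.exists_eq_mul_self (d' ^ 2 - a' * c')
    obtain ⟨t, ht⟩ : ∃ t : k, a' * e ^ 2 - 2 * d' * e * t + c' * t ^ 2 = 0 :=
      ⟨(d' + s) * e / c', by field_simp; linear_combination -e ^ 2 * hs⟩
    have h0 : !![0, t, 0; t, b, e; 0, e, 0] = 0 := by
      refine hW.smooth _ ?_ fun A hA => ?_
      · convert W.add_mem hU (W.smul_mem t hE) using 1
        ext i j
        fin_cases i <;> fin_cases j <;> simp [matE]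
      · obtain ⟨x, y, z, rfl⟩ := exists_coords hW.finrank hE hU hB (by
          intro x y z h
          have h1 := congrFun (congrFun h 0) 1
          have h2 := congrFun (congrFun h 1) 2
          have h3 := congrFun (congrFun h 2) 2
          simp [matE, hc] at h1 h3
          simp [matE, h3, he] at h2
          exact ⟨h1, h2, h3⟩) A hA
        simp [adjugate_fin_three_of, trace_fin_three, matE]
        linear_combination -z * ht
    have := congrFun (congrFun h0 1) 2
    simp [he] at this
  -- `Z ↦ Z - (b/2e) Y - (d'/c') X` clears `Y²` from the second conic and `XZ` from the third.
  set g : Matrix (Fin 3) (Fin 3) k := !![1, 0, 0; 0, 1, 0; -d' / c', -b / (2 * e), 1] with hg_def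
  have hg : IsUnit g := by
    rw [isUnit_iff_isUnit_det, det_fin_three]
    simp [g]
  have hE' : matE k ∈ W.map (cong g) := by
    refine ⟨_, hE, ?_⟩
    rw [cong_apply, matE, hg_def]
    ext i j
    fin_cases i <;> fin_cases j <;> simp [Matrix.mul_apply, Fin.sum_univ_three]
  have hU' : !![a, 0, 0; 0, 0, e; 0, e, 0] ∈ W.map (cong g) := by
    have h := Submodule.add_mem _ (Submodule.mem_map_of_mem (f := cong g) hU)
      (Submodule.smul_mem _ (e * d' / c') hE')
    convert h using 1
    rw [cong_apply, matE, hg_def]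
    ext i j
    fin_cases i <;> fin_cases j <;> simp [Matrix.mul_apply, Fin.sum_univ_three]
    all_goals field_simp
    all_goals ring
  have hB1 := Submodule.sub_mem _ (Submodule.mem_map_of_mem (f := cong g) hB)
      (Submodule.smul_mem _ ((a' - d' ^ 2 / c') / a) hU')
  have hB2 := Submodule.sub_mem _ hB1
      (Submodule.smul_mem _ (-d' / c' * e') hE')
  refine HasNF.of_map_cong hg (hasNF_of_binary (hW.map_cong hg) hE' ha he hc hU'
    (b := b' - e' * b / e + c' * b ^ 2 / (4 * e ^ 2))
    (f := e' - c' * b / (2 * e) - (a' - d' ^ 2 / c') / a * e) ?_)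
  convert hB2 using 1
  rw [cong_apply, matE, hg_def]
  ext i j
  fin_cases i <;> fin_cases j <;> simp [Matrix.mul_apply, Fin.sum_univ_three]
  all_goals field_simp
  all_goals first | (left; ring1) | ring1

lemma eq_of_symm {k : Type} [Field k] {A : Matrix (Fin 3) (Fin 3) k} (h : Aᵀ = A) :
    A = !![A 0 0, A 0 1, A 0 2; A 0 1, A 1 1, A 1 2; A 0 2, A 1 2, A 2 2] := by
  have h1 := congrFun (congrFun h 0) 1
  have h2 := congrFun (congrFun h 0) 2
  have h3 := congrFun (congrFun h 1) 2
  simp only [transpose_apply] at h1 h2 h3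
  ext i j
  fin_cases i <;> fin_cases j <;> simp [h1, h2, h3]

/-- The second differential of `det` at `XY` only involves the coefficients of `XZ`, `YZ`, `Z²` and
`XY`. -/
lemma trace_bil_matE {k : Type} [Field k] {A B : Matrix (Fin 3) (Fin 3) k} (hA : Aᵀ = A)
    (hB : Bᵀ = B) : trace (bil (matE k) A * B) =
      2 * (A 0 2 * B 1 2 + B 0 2 * A 1 2 - A 2 2 * B 0 1 - B 2 2 * A 0 1) := by
  rw [eq_of_symm hA, eq_of_symm hB, bil, matE]
  simp [adjugate_fin_three, trace_fin_three]
  ring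

/-- A net containing `XY` as a flex of its discriminant: the conic `U` spanning the radical of the
second differential at `XY` passes through the vertex of `XY` and is tangent there to one of the
two lines. -/
lemma hasNF_of_matE {k : Type} [Field k] [IsAlgClosed k] [CharZero k]
    {W : Submodule k (Matrix (Fin 3) (Fin 3) k)} (hW : SmoothNet W) (hE : matE k ∈ W)
    {U : Matrix (Fin 3) (Fin 3) k} (hU : U ∈ W) (hU0 : U ≠ 0)
    (h : ∀ B ∈ W, trace (bil (matE k) U * B) = 0) : HasNF W := by
  have h' : ∀ B ∈ W, U 0 2 * B 1 2 + B 0 2 * U 1 2 - U 2 2 * B 0 1 - B 2 2 * U 0 1 = 0 := by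
    intro B hB
    have := h B hB
    rw [trace_bil_matE (hW.symm U hU) (hW.symm B hB)] at this
    simpa using this
  obtain ⟨B, hB, hc⟩ : ∃ B ∈ W, B 2 2 ≠ 0 := by
    by_contra! hcon
    have := hW.smooth _ hE fun B hB => by
      simp [matE, adjugate_fin_three_of, trace_fin_three, vecMul, dotProduct, Fin.sum_univ_three,
        hcon B hB]
    have := congrFun (congrFun this 0) 1
    simp [matE] at this
  have hU22 : U 2 2 = 0 := by simpa [matE] using h' _ hE
  have hdU : U 0 2 = 0 ∨ U 1 2 = 0 := by
    have := h' _ hU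
    rw [hU22] at this
    have : 2 * (U 0 2 * U 1 2) = 0 := by linear_combination this
    simpa using this
  have hUs := eq_of_symm (hW.symm U hU)
  have hBs := eq_of_symm (hW.symm B hB)
  -- Subtracting multiples of `XY` clears the `XY` coefficient.
  have hU1 : U - U 0 1 • matE k ∈ W := W.sub_mem hU (W.smul_mem _ hE)
  have hB1 : B - B 0 1 • matE k ∈ W := W.sub_mem hB (W.smul_mem _ hE)
  have hU2 : U - U 0 1 • matE k ≠ 0 := by
    intro h0
    have h02 : U 0 2 = 0 := by simpa [matE] using congrFun (congrFun h0 0) 2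
    have h12 : U 1 2 = 0 := by simpa [matE] using congrFun (congrFun h0 1) 2
    have h01 : U 0 1 = 0 := by simpa [h02, h12, hU22, hc] using h' _ hB
    simp [h01] at h0
    exact hU0 h0
  have hB3 : B - B 0 1 • matE k
      = !![B 0 0, 0, B 0 2; 0, B 1 1, B 1 2; B 0 2, B 1 2, B 2 2] := by
    nth_rw 1 [hBs]
    ext i j
    fin_cases i <;> fin_cases j <;> simp [matE]
  have hU3 : U - U 0 1 • matE k
      = !![U 0 0, 0, U 0 2; 0, U 1 1, U 1 2; U 0 2, U 1 2, 0] := by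
    nth_rw 1 [hUs]
    ext i j
    fin_cases i <;> fin_cases j <;> simp [matE, hU22]
  rw [hU3] at hU1 hU2
  rw [hB3] at hB1
  rcases hdU with h0 | h0
  · rw [h0] at hU1 hU2
    exact hasNF_of_tangent hW hE hU1 hU2 hc hB1
  · rw [h0] at hU1 hU2
    set g : Matrix (Fin 3) (Fin 3) k := !![0, 1, 0; 1, 0, 0; 0, 0, 1] with hg_def
    have hg : IsUnit g := by
      rw [isUnit_iff_isUnit_det, det_fin_three]
      simp [g]
    have hsw : ∀ a d b e c : k, cong g !![a, 0, d; 0, b, e; d, e, c]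
        = !![b, 0, e; 0, a, d; e, d, c] := by
      intro a d b e c
      rw [cong_apply, hg_def]
      ext i j
      fin_cases i <;> fin_cases j <;> simp [Matrix.mul_apply, Fin.sum_univ_three]
    have hE' : matE k ∈ W.map (cong g) := by
      refine ⟨_, hE, ?_⟩
      rw [cong_apply, matE, hg_def]
      ext i j
      fin_cases i <;> fin_cases j <;> simp [Matrix.mul_apply, Fin.sum_univ_three]
    have hU4 := Submodule.mem_map_of_mem (f := cong g) hU1
    have hB4 := Submodule.mem_map_of_mem (f := cong g) hB1
    rw [hsw] at hU4 hB4
    refine HasNF.of_map_cong hg (hasNF_of_tangent (hW.map_cong hg) hE' hU4 ?_ hc hB4)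
    rw [← hsw]
    exact (map_ne_zero_iff _ (cong_injective hg)).2 hU2

/-- A conic of rank two is a pair of distinct lines, so it is `XY` in suitable coordinates. -/
lemma exists_cong_eq_matE {k : Type} [Field k] [IsAlgClosed k] [CharZero k]
    {P : Matrix (Fin 3) (Fin 3) k} (hs : Pᵀ = P) (hdet : det P = 0) (hadj : adjugate P ≠ 0) :
    ∃ g : Matrix (Fin 3) (Fin 3) k, IsUnit g ∧ ∃ c : k, c ≠ 0 ∧ cong g P = c • matE k := by
  obtain ⟨p, hp0, hp⟩ := (exists_mulVec_eq_zero_iff (M := P)).2 hdet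
  -- a coordinate change moving `(0, 0, 1)` to the vertex `p`
  obtain ⟨g, hg, hgp⟩ : ∃ g : Matrix (Fin 3) (Fin 3) k, IsUnit g ∧ ∀ i, g i 2 = p i := by
    have : ∃ i, p i ≠ 0 := by
      by_contra! hcon
      exact hp0 (funext hcon)
    obtain ⟨i, hi⟩ := this
    fin_cases i
    · refine ⟨!![0, 0, p 0; 1, 0, p 1; 0, 1, p 2], ?_, ?_⟩
      · rw [isUnit_iff_isUnit_det, det_fin_three]
        simpa using hi
      · intro i; fin_cases i <;> simp
    · refine ⟨!![1, 0, p 0; 0, 0, p 1; 0, 1, p 2], ?_, ?_⟩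
      · rw [isUnit_iff_isUnit_det, det_fin_three]
        simpa using hi
      · intro i; fin_cases i <;> simp
    · refine ⟨!![1, 0, p 0; 0, 1, p 1; 0, 0, p 2], ?_, ?_⟩
      · rw [isUnit_iff_isUnit_det, det_fin_three]
        simpa using hi
      · intro i; fin_cases i <;> simp
  have hQs : (cong g P)ᵀ = cong g P := by simp [cong_apply, Matrix.mul_assoc, hs]
  have hQ2 : ∀ i, cong g P i 2 = 0 := by
    intro i
    have hPg : ∀ j, (P * g) j 2 = 0 := by
      intro j
      have := congrFun hp j
      simpa [mulVec, dotProduct, Matrix.mul_apply, hgp] using this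
    rw [cong_apply, Matrix.mul_assoc, Matrix.mul_apply]
    simp [hPg]
  obtain ⟨a, m, b, hQ⟩ : ∃ a m b : k, cong g P = !![a, m, 0; m, b, 0; 0, 0, 0] :=
    ⟨_, _, _, by
      have := eq_of_symm hQs
      rw [hQ2, hQ2, hQ2] at this
      exact this⟩
  have hdisc : m ^ 2 - a * b ≠ 0 := by
    intro h0
    apply hadj
    have hadj' : adjugate (cong g P) = 0 := by
      rw [hQ, adjugate_fin_three_of]
      ext i j
      fin_cases i <;> fin_cases j <;> simp
      linear_combination -h0
    have hd := det_ne_zero_of_isUnit hg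
    rw [adjugate_cong] at hadj'
    have : g * (adjugate g * adjugate P * adjugate gᵀ) * gᵀ = (det g ^ 2) • adjugate P := by
      calc _ = (g * adjugate g) * adjugate P * (adjugate gᵀ * gᵀ) := by
            simp only [Matrix.mul_assoc]
        _ = _ := by
          rw [mul_adjugate, adjugate_mul, det_transpose]
          simp [smul_smul, sq]
    rw [hadj'] at this
    simpa [hd] using this.symm
  suffices H : ∃ h : Matrix (Fin 3) (Fin 3) k, IsUnit h ∧ ∃ c : k, c ≠ 0 ∧
      cong h (cong g P) = c • matE k by
    obtain ⟨h, hh, c, hc, H⟩ := H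
    refine ⟨g * h, hg.mul hh, c, hc, ?_⟩
    rw [← H, ← cong_comp]; rfl
  rw [hQ]
  by_cases ha : a = 0
  · subst ha
    have hm : m ≠ 0 := by rintro rfl; simp at hdisc
    refine ⟨!![1, -b, 0; 0, 2 * m, 0; 0, 0, 1], ?_, 2 * m ^ 2, by simpa using hm, ?_⟩
    · rw [isUnit_iff_isUnit_det, det_fin_three]
      simpa using hm
    · rw [cong_apply, matE]
      ext i j
      fin_cases i <;> fin_cases j <;> simp [Matrix.mul_apply, Fin.sum_univ_three]
      all_goals ring
  · obtain ⟨s, hsq⟩ := IsAlgClosed.exists_eq_mul_self (m ^ 2 - a * b)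
    have hs0 : s ≠ 0 := by rintro rfl; simp [hdisc] at hsq
    refine ⟨!![-m + s, -m - s, 0; a, a, 0; 0, 0, 1], ?_, -2 * a * s ^ 2, by simp [ha, hs0], ?_⟩
    · rw [isUnit_iff_isUnit_det, det_fin_three]
      have : (-m + s) * a - (-m - s) * a = 2 * a * s := by ring
      simp [this, ha, hs0]
    · rw [cong_apply, matE]
      ext i j
      fin_cases i <;> fin_cases j <;> simp [Matrix.mul_apply, Fin.sum_univ_three]
      · linear_combination -a * hsq
      · linear_combination -a * hsq
      · linear_combination -a * hsq
      · linear_combination -a * hsq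

/-! ### Existence of a flex -/

lemma bil_map {R S : Type} [CommRing R] [CommRing S] (f : R →+* S)
    (A B : Matrix (Fin 3) (Fin 3) R) : (bil A B).map f = bil (A.map f) (B.map f) := by
  have h : ∀ M : Matrix (Fin 3) (Fin 3) R, (adjugate M).map f = adjugate (M.map f) :=
    fun M => f.map_adjugate M
  rw [bil, bil, ← h, ← h, Matrix.map_sub _ (map_sub f), Matrix.map_sub _ (map_sub f), h (A + B),
    Matrix.map_add _ (map_add f)]

lemma bil_comm {R : Type} [CommRing R] (A B : Matrix (Fin 3) (Fin 3) R) : bil A B = bil B A := by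
  rw [bil, bil, add_comm]
  abel

lemma bil_add {k : Type} [Field k] (A B C : Matrix (Fin 3) (Fin 3) k) :
    bil A (B + C) = bil A B + bil A C := by
  simp only [bil, adjugate_fin_three]
  ext i j
  fin_cases i <;> fin_cases j <;> simp <;> ring

lemma bil_smul {k : Type} [Field k] (A B : Matrix (Fin 3) (Fin 3) k) (c : k) :
    bil A (c • B) = c • bil A B := by
  simp only [bil, adjugate_fin_three]
  ext i j
  fin_cases i <;> fin_cases j <;> simp <;> ring

lemma trace_bil_sum {k : Type} [Field k] (A C : Matrix (Fin 3) (Fin 3) k) (x : Fin 3 → k)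
    (v : Fin 3 → Matrix (Fin 3) (Fin 3) k) :
    trace (bil A (∑ i, x i • v i) * C) = ∑ i, x i * trace (bil A (v i) * C) := by
  simp [Fin.sum_univ_three, bil_add, bil_smul, add_mul]

/-- The discriminant cubic has a flex: a zero `P` of `det` at which the second differential,
restricted to the net, has a nonzero radical vector `U`. -/
lemma exists_flex {k : Type} [Field k] [IsAlgClosed k]
    {W : Submodule k (Matrix (Fin 3) (Fin 3) k)} (hW : Module.finrank k W = 3) :
    ∃ P ∈ W, ∃ U ∈ W, P ≠ 0 ∧ U ≠ 0 ∧ det P = 0 ∧ ∀ B ∈ W, trace (bil P U * B) = 0 := by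
  let b := Module.finBasisOfFinrankEq k W hW
  let v : Fin 3 → Matrix (Fin 3) (Fin 3) k := fun i => b i
  have hv : LinearIndependent k v := b.linearIndependent.map' W.subtype W.ker_subtype
  have hvW : ∀ i, v i ∈ W := fun i => (b i).2
  have hspan : ∀ B ∈ W, ∃ x : Fin 3 → k, B = ∑ i, x i • v i := by
    intro B hB
    refine ⟨b.repr ⟨B, hB⟩, ?_⟩
    have := congrArg W.subtype (b.sum_repr ⟨B, hB⟩)
    rw [map_sum] at this
    simp only [map_smul, Submodule.subtype_apply] at this
    exact this.symm
  -- the generic member of the net, over the polynomial ring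
  let A : Matrix (Fin 3) (Fin 3) (MvPolynomial (Fin 3) k) :=
    ∑ m, (X m : MvPolynomial (Fin 3) k) • (v m).map C
  have hA : ∀ p : Fin 3 → k, A.map (eval p) = ∑ m, p m • v m := by
    intro p
    ext i j
    simp [A, Matrix.sum_apply, Matrix.map_apply]
  -- the matrix whose determinant is the Hessian of the discriminant cubic
  let H : Matrix (Fin 3) (Fin 3) (MvPolynomial (Fin 3) k) :=
    of fun i j => trace (bil A ((v i).map C) * (v j).map C)
  have hmapC : ∀ (p : Fin 3 → k) (M : Matrix (Fin 3) (Fin 3) k), (M.map C).map (eval p) = M := by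
    intro p M
    ext i j
    simp
  have htr : ∀ (p : Fin 3 → k) (M : Matrix (Fin 3) (Fin 3) (MvPolynomial (Fin 3) k)),
      eval p (trace M) = trace (M.map (eval p)) := by
    intro p M
    simp [trace_fin_three]
  have hH : ∀ p : Fin 3 → k, H.map (eval p)
      = of fun i j => trace (bil (∑ m, p m • v m) (v i) * v j) := by
    intro p
    ext i j
    simp only [H, map_apply, of_apply]
    rw [← hA, htr, Matrix.map_mul, bil_map, hmapC, hmapC]
  have hdetmap : ∀ (p : Fin 3 → k) (M : Matrix (Fin 3) (Fin 3) (MvPolynomial (Fin 3) k)),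
      eval p M.det = (M.map (eval p)).det := fun p M => (eval p).map_det M
  obtain ⟨p, hp, h1, h2⟩ := exists_common_zero A.det H.det
    (by rw [hdetmap, hA]; simp)
    (by
      rw [hdetmap, hH]
      have : (of fun i j => trace (bil (∑ m, (0 : Fin 3 → k) m • v m) (v i) * v j)) = 0 := by
        ext i j
        simp [bil]
      rw [this]
      simp)
  rw [hdetmap, hA] at h1
  rw [hdetmap, hH] at h2
  obtain ⟨x, hx, hxH⟩ := exists_vecMul_eq_zero_iff.2 h2
  have hne : ∀ y : Fin 3 → k, y ≠ 0 → ∑ m, y m • v m ≠ 0 := fun y hy h0 =>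
    hy (funext (Fintype.linearIndependent_iff.1 hv y h0))
  refine ⟨_, W.sum_mem fun i _ => W.smul_mem (p i) (hvW i), ∑ i, x i • v i,
    W.sum_mem fun i _ => W.smul_mem (x i) (hvW i), hne p hp, hne x hx, h1, ?_⟩
  intro B hB
  obtain ⟨y, rfl⟩ := hspan B hB
  rw [Finset.mul_sum, trace_sum]
  refine Finset.sum_eq_zero fun j _ => ?_
  rw [mul_smul_comm, trace_smul, trace_bil_sum]
  have := congrFun hxH j
  simp only [vecMul, dotProduct, of_apply, Pi.zero_apply] at this
  rw [this, smul_zero]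

/-- The hard direction: at a flex `P` smoothness forces `adj P ≠ 0`, that is rank two, so `P` may be
taken to be `XY`. -/
theorem SmoothNet.hasNF {k : Type} [Field k] [IsAlgClosed k] [CharZero k]
    {W : Submodule k (Matrix (Fin 3) (Fin 3) k)} (hW : SmoothNet W) : HasNF W := by
  obtain ⟨P, hP, U, hU, hP0, hU0, hdet, h⟩ := exists_flex hW.finrank
  have hadj : adjugate P ≠ 0 := by
    intro h0
    exact hP0 (hW.smooth P hP fun B _ => by simp [h0])
  obtain ⟨g, hg, c, hc, hgP⟩ := exists_cong_eq_matE (hW.symm P hP) hdet hadj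
  have hE : matE k = cong g (c⁻¹ • P) := by
    rw [map_smul, hgP, smul_smul, inv_mul_cancel₀ hc, one_smul]
  refine HasNF.of_map_cong hg (hasNF_of_matE (hW.map_cong hg) (U := cong g U) ?_
    (Submodule.mem_map_of_mem hU) ((map_ne_zero_iff _ (cong_injective hg)).2 hU0) ?_)
  · rw [hE]
    exact Submodule.mem_map_of_mem (W.smul_mem _ hP)
  · rintro _ ⟨B, hB, rfl⟩
    rw [hE, bil_cong, trace_cong]
    rw [bil_comm, bil_smul, bil_comm, smul_mul_assoc, trace_smul, h B hB, smul_zero, mul_zero]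

/-! ### Quadratic forms and their matrices of second derivatives -/

/-- `Mmat` as a linear map. -/
def mlin (k : Type) [Field k] : MvPolynomial (Fin 3) k →ₗ[k] Matrix (Fin 3) (Fin 3) k where
  toFun := Mmat
  map_add' p q := by ext i j; simp [Mmat]
  map_smul' c p := by ext i j; simp [Mmat]

lemma mlin_apply {k : Type} [Field k] (q : MvPolynomial (Fin 3) k) : mlin k q = Mmat q := rfl

lemma Mmat_sum {k : Type} [Field k] (p : Fin 3 → k) (v : Fin 3 → MvPolynomial (Fin 3) k) :
    Mmat (∑ i, p i • v i) = ∑ i, p i • Mmat (v i) := by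
  rw [← mlin_apply, map_sum]
  simp only [map_smul, mlin_apply]

/-- The quadratic form `∑ S i j X_i X_j`. -/
def qf {k : Type} [Field k] (S : Matrix (Fin 3) (Fin 3) k) : MvPolynomial (Fin 3) k :=
  ∑ i, ∑ j, C (S i j) * (X i * X j)

lemma Mmat_qf {k : Type} [Field k] (S : Matrix (Fin 3) (Fin 3) k) : Mmat (qf S) = S + Sᵀ := by
  ext i j
  fin_cases i <;> fin_cases j <;>
    simp [Mmat, qf, Fin.sum_univ_three, pderiv_X, Pi.single_apply] <;> ring

/-- Euler's formula, applied twice. -/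
lemma two_smul_eq_qf {k : Type} [Field k] {q : MvPolynomial (Fin 3) k}
    (hq : q ∈ homogeneousSubmodule (Fin 3) k 2) : (2 : k) • q = qf (Mmat q) := by
  have hq : q.IsHomogeneous 2 := hq
  have h1 : ∀ j, pderiv j q = ∑ i, C (Mmat q i j) * X i := by
    intro j
    have hj : (pderiv j q).IsHomogeneous 1 := hq.pderiv
    have := hj.sum_X_mul_pderiv
    rw [one_smul] at this
    rw [← this]
    refine Finset.sum_congr rfl fun i _ => ?_
    have hij : (pderiv i (pderiv j q)).IsHomogeneous 0 := hj.pderiv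
    have hC := totalDegree_eq_zero_iff_eq_C.1 ((totalDegree_zero_iff_isHomogeneous _).2 hij)
    rw [mul_comm]
    exact congrArg (· * X i) hC
  have := hq.sum_X_mul_pderiv
  rw [two_smul, ← two_nsmul, ← this, qf, Finset.sum_comm]
  refine Finset.sum_congr rfl fun j _ => ?_
  rw [h1, Finset.mul_sum]
  refine Finset.sum_congr rfl fun i _ => ?_
  ring

lemma eq_qf {k : Type} [Field k] [CharZero k] {q : MvPolynomial (Fin 3) k}
    (hq : q ∈ homogeneousSubmodule (Fin 3) k 2) : q = (2 : k)⁻¹ • qf (Mmat q) := by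
  rw [← two_smul_eq_qf hq, smul_smul, inv_mul_cancel₀ two_ne_zero, one_smul]

lemma Mmat_injOn {k : Type} [Field k] [CharZero k] {q r : MvPolynomial (Fin 3) k}
    (hq : q ∈ homogeneousSubmodule (Fin 3) k 2) (hr : r ∈ homogeneousSubmodule (Fin 3) k 2)
    (h : Mmat q = Mmat r) : q = r := by
  rw [eq_qf hq, eq_qf hr, h]

lemma qf_mem {k : Type} [Field k] (S : Matrix (Fin 3) (Fin 3) k) :
    qf S ∈ homogeneousSubmodule (Fin 3) k 2 := by
  refine Submodule.sum_mem _ fun i _ => Submodule.sum_mem _ fun j _ => ?_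
  have := ((isHomogeneous_C (Fin 3) (S i j)).mul ((isHomogeneous_X k i).mul (isHomogeneous_X k j)))
  simpa using this

lemma subst_qf {k : Type} [Field k] (g S : Matrix (Fin 3) (Fin 3) k) :
    subst g (qf S) = qf (cong g S) := by
  simp only [subst, qf, Fin.sum_univ_three, map_add, map_mul, aeval_X, cong_apply,
    Matrix.mul_apply, transpose_apply]
  simp only [← algebraMap_eq, AlgHom.commutes]
  ring

/-- Partial derivatives commute. -/
lemma Mmat_transpose {k : Type} [Field k] (q : MvPolynomial (Fin 3) k) :
    (Mmat q)ᵀ = Mmat q := by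
  ext i j
  simp only [Mmat, transpose_apply, of_apply]
  congr 1
  have h0 : ⁅(pderiv j : Derivation k (MvPolynomial (Fin 3) k) (MvPolynomial (Fin 3) k)),
      (pderiv i : Derivation k (MvPolynomial (Fin 3) k) (MvPolynomial (Fin 3) k))⁆ = 0 := by
    refine derivation_ext (R := k) (A := MvPolynomial (Fin 3) k) fun n => ?_
    rw [Derivation.commutator_apply, pderiv_X, pderiv_X, Pi.single_apply, Pi.single_apply]
    split_ifs <;> simp
  have := congrArg
    (fun D : Derivation k (MvPolynomial (Fin 3) k) (MvPolynomial (Fin 3) k) => D q) h0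
  rw [Derivation.commutator_apply] at this
  exact sub_eq_zero.1 this

lemma subst_mem {k : Type} [Field k] [CharZero k] (g : Matrix (Fin 3) (Fin 3) k)
    {q : MvPolynomial (Fin 3) k} (hq : q ∈ homogeneousSubmodule (Fin 3) k 2) :
    subst g q ∈ homogeneousSubmodule (Fin 3) k 2 := by
  rw [eq_qf hq, map_smul, subst_qf]
  exact Submodule.smul_mem _ _ (qf_mem _)

lemma Mmat_subst {k : Type} [Field k] [CharZero k] (g : Matrix (Fin 3) (Fin 3) k)
    {q : MvPolynomial (Fin 3) k} (hq : q ∈ homogeneousSubmodule (Fin 3) k 2) :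
    Mmat (subst g q) = cong g (Mmat q) := by
  have h1 : subst g q = (2 : k)⁻¹ • qf (cong g (Mmat q)) := by
    conv_lhs => rw [eq_qf hq]
    rw [map_smul, subst_qf]
  have ht : (cong g (Mmat q))ᵀ = cong g (Mmat q) := by
    simp [cong_apply, Matrix.mul_assoc, Mmat_transpose]
  rw [h1, ← mlin_apply, map_smul, mlin_apply, Mmat_qf, ht, ← two_smul k, smul_smul,
    inv_mul_cancel₀ two_ne_zero, one_smul]

/-- Jacobi's formula for the gradient of the discriminant cubic. -/
lemma eval_pderiv_disc {k : Type} [Field k] (v : Fin 3 → MvPolynomial (Fin 3) k) (p : Fin 3 → k)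
    (m : Fin 3) : eval p (pderiv m (disc v)) =
      trace (adjugate (Mmat (∑ i, p i • v i)) * Mmat (v m)) := by
  have hev : ∀ i j, eval p (∑ m, X m * C (Mmat (v m) i j)) = Mmat (∑ i, p i • v i) i j := by
    intro i j
    rw [Mmat_sum, Matrix.sum_apply]
    simp
  have hd : ∀ i j, pderiv m (∑ m, X m * C (Mmat (v m) i j)) = C (Mmat (v m) i j) := by
    intro i j
    simp [pderiv_X, Pi.single_apply]
  rw [disc, det_fin_three]
  simp only [of_apply, map_sub, map_add, Derivation.leibniz, smul_eq_mul, hd]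
  simp only [map_add, map_mul, hev, eval_C]
  generalize Mmat (∑ i, p i • v i) = A
  generalize Mmat (v m) = B
  rw [adjugate_fin_three, trace_fin_three]
  simp only [Matrix.mul_apply, Fin.sum_univ_three]
  simp
  ring

/-- The smoothness condition in coordinates agrees with the basis-free one, by Jacobi's formula. -/
lemma hasSmoothDiscriminant_iff {k : Type} [Field k] [CharZero k]
    {V : Submodule k (MvPolynomial (Fin 3) k)} (hV : IsNet V) :
    HasSmoothDiscriminant V ↔ SmoothMat (V.map (mlin k)) := by
  have hsum : ∀ (v : Fin 3 → MvPolynomial (Fin 3) k), Submodule.span k (Set.range v) = V →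
      ∀ q ∈ V, ∃ x : Fin 3 → k, q = ∑ i, x i • v i := by
    rintro v rfl q hq
    obtain ⟨c, hc⟩ := (Submodule.mem_span_range_iff_exists_fun k).1 hq
    exact ⟨c, hc.symm⟩
  constructor
  · intro h
    have : FiniteDimensional k V := Module.finite_of_finrank_pos (by rw [hV.2]; norm_num)
    let b := Module.finBasisOfFinrankEq k V hV.2
    let v : Fin 3 → MvPolynomial (Fin 3) k := fun i => b i
    have hv : LinearIndependent k v := b.linearIndependent.map' V.subtype V.ker_subtype
    have hspan : Submodule.span k (Set.range v) = V := by
      have : Set.range v = V.subtype '' Set.range b := by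
        rw [← Set.range_comp]; rfl
      rw [this, Submodule.span_image, b.span_eq, Submodule.map_subtype_top]
    have hs := h v hv hspan
    rintro _ ⟨q, hq, rfl⟩ hB
    obtain ⟨x, rfl⟩ := hsum v hspan q hq
    have hx : x = 0 := hs x fun i => by
      rw [eval_pderiv_disc]
      exact hB _ (Submodule.mem_map_of_mem (b i).2)
    simp [hx]
  · intro h v hv hspan p hp
    have hvV : ∀ i, v i ∈ V := fun i => hspan ▸ Submodule.subset_span ⟨i, rfl⟩
    have hq : ∑ i, p i • v i ∈ V := V.sum_mem fun i _ => V.smul_mem _ (hvV i)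
    have h0 := h _ (Submodule.mem_map_of_mem (f := mlin k) hq) (by
      rintro _ ⟨r, hr, rfl⟩
      obtain ⟨y, rfl⟩ := hsum v hspan r hr
      rw [mlin_apply, mlin_apply, Mmat_sum y, Finset.mul_sum, trace_sum]
      refine Finset.sum_eq_zero fun j _ => ?_
      rw [mul_smul_comm, trace_smul, ← eval_pderiv_disc, hp, smul_zero])
    have h1 : ∑ i, p i • v i = 0 := Mmat_injOn (hV.1 hq) (Submodule.zero_mem _) (by
      rw [← mlin_apply, ← mlin_apply, h0, map_zero])
    exact funext (Fintype.linearIndependent_iff.1 hv p h1)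

lemma IsNet.smoothNet {k : Type} [Field k] [CharZero k]
    {V : Submodule k (MvPolynomial (Fin 3) k)} (hV : IsNet V)
    (h : SmoothMat (V.map (mlin k))) : SmoothNet (V.map (mlin k)) where
  symm := by
    rintro _ ⟨q, _, rfl⟩
    exact Mmat_transpose q
  finrank := by
    have hinj : Function.Injective ((mlin k).domRestrict V) := fun q r hqr =>
      Subtype.ext (Mmat_injOn (hV.1 q.2) (hV.1 r.2) hqr)
    rw [← LinearMap.range_domRestrict]
    exact (LinearMap.finrank_range_of_inj hinj).trans hV.2
  smooth := h

lemma map_mlin_map_subst {k : Type} [Field k] [CharZero k]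
    {V : Submodule k (MvPolynomial (Fin 3) k)} (hV : V ≤ homogeneousSubmodule (Fin 3) k 2)
    (g : Matrix (Fin 3) (Fin 3) k) :
    (V.map (subst g).toLinearMap).map (mlin k) = (V.map (mlin k)).map (cong g) := by
  ext A
  simp only [Submodule.mem_map, exists_exists_and_eq_and]
  refine exists_congr fun q => and_congr_right fun hq => ?_
  rw [mlin_apply, mlin_apply, AlgHom.toLinearMap_apply, Mmat_subst g (hV hq)]

/-- The three generators of `Wnet k α` as quadratic forms of (non-symmetric) matrices. -/
lemma gen_eq_qf {k : Type} [Field k] (α : k) :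
    (X 1 * X 2 - X 0 ^ 2 : MvPolynomial (Fin 3) k) = qf !![-1, 0, 0; 0, 0, 1; 0, 0, 0] ∧
    ((X 1 - X 2) * (X 1 - C α * X 2) : MvPolynomial (Fin 3) k)
      = qf !![0, 0, 0; 0, 1, -(1 + α); 0, 0, α] ∧
    (X 0 * X 1 : MvPolynomial (Fin 3) k) = qf !![0, 1, 0; 0, 0, 0; 0, 0, 0] := by
  refine ⟨?_, ?_, ?_⟩ <;> simp [qf, Fin.sum_univ_three] <;> ring

lemma Mmat_gen {k : Type} [Field k] (α : k) :
    Mmat (X 1 * X 2 - X 0 ^ 2 : MvPolynomial (Fin 3) k) = matU k ∧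
    Mmat ((X 1 - X 2) * (X 1 - C α * X 2) : MvPolynomial (Fin 3) k) = matB α ∧
    Mmat (X 0 * X 1 : MvPolynomial (Fin 3) k) = matE k := by
  obtain ⟨h1, h2, h3⟩ := gen_eq_qf α
  rw [h1, h2, h3, Mmat_qf, Mmat_qf, Mmat_qf]
  refine ⟨?_, ?_, ?_⟩ <;> ext i j <;> fin_cases i <;> fin_cases j <;>
    simp [matU, matB, matE] <;> ring

lemma map_mlin_Wnet {k : Type} [Field k] (α : k) :
    (Wnet k α).map (mlin k) = Submodule.span k {matU k, matB α, matE k} := by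
  obtain ⟨h1, h2, h3⟩ := Mmat_gen α
  rw [Wnet, Submodule.map_span, Set.image_insert_eq, Set.image_pair, mlin_apply, mlin_apply,
    mlin_apply, h1, h2, h3]

lemma Wnet_le {k : Type} [Field k] (α : k) : Wnet k α ≤ homogeneousSubmodule (Fin 3) k 2 := by
  obtain ⟨h1, h2, h3⟩ := gen_eq_qf α
  rw [Wnet, Submodule.span_le, h1, h2, h3]
  rintro _ (rfl | rfl | rfl) <;> exact qf_mem _

lemma finrank_Wnet {k : Type} [Field k] [CharZero k] (α : k) :
    Module.finrank k (Wnet k α) = 3 := by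
  obtain ⟨h1, h2, h3⟩ := Mmat_gen α
  set v : Fin 3 → MvPolynomial (Fin 3) k :=
    ![X 1 * X 2 - X 0 ^ 2, (X 1 - X 2) * (X 1 - C α * X 2), X 0 * X 1] with hv_def
  have hv : LinearIndependent k v := by
    rw [Fintype.linearIndependent_iff]
    intro c hc
    have := congrArg (mlin k) hc
    simp only [Fin.sum_univ_three, map_add, map_smul, mlin_apply, v, map_zero, Matrix.cons_val,
      h1, h2, h3] at this
    have e0 := congrFun (congrFun this 0) 0
    have e1 := congrFun (congrFun this 1) 1
    have e2 := congrFun (congrFun this 0) 1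
    simp [matU, matB, matE] at e0 e1 e2
    intro i
    fin_cases i <;> assumption
  have hr : Wnet k α = Submodule.span k (Set.range v) := by
    rw [Wnet, hv_def, Matrix.range_cons, Matrix.range_cons, Matrix.range_cons, Matrix.range_empty,
      Set.union_empty, Set.singleton_union, Set.singleton_union]
  rw [hr, finrank_span_eq_card hv]
  rfl

/-! ### The normal form -/

/-- The discriminant of the family is smooth exactly for `α ≠ 0, 1`. -/
lemma smoothMat_normal_form {k : Type} [Field k] [CharZero k] (α : k) :
    SmoothMat (Submodule.span k {matU k, matB α, matE k}) ↔ α ≠ 0 ∧ α ≠ 1 := by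
  set W := Submodule.span k {matU k, matB α, matE k} with hW
  have hU : matU k ∈ W := Submodule.subset_span (by simp)
  have hB : matB α ∈ W := Submodule.subset_span (by simp)
  have hE : matE k ∈ W := Submodule.subset_span (by simp)
  have hmem : ∀ A ∈ W, ∃ x y z : k, A = x • matU k + y • matB α + z • matE k := by
    intro A hA
    obtain ⟨x, y, z, h⟩ := Submodule.mem_span_triple.1 hA
    exact ⟨x, y, z, h.symm⟩
  constructor
  · intro h
    constructor
    · rintro rfl
      -- for `α = 0` the base point `(0 : 0 : 1)` is a singular point of a member of the net
      have := h _ (W.add_mem hU hB) (by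
        intro A hA
        obtain ⟨x, y, z, rfl⟩ := hmem A hA
        simp [matU, matB, matE, adjugate_fin_three_of, trace_fin_three])
      have := congrFun (congrFun this 0) 0
      simp [matU, matB] at this
    · rintro rfl
      -- for `α = 1` the second generator is the square of a line
      have := h _ hB (by
        intro A hA
        obtain ⟨x, y, z, rfl⟩ := hmem A hA
        simp [matU, matB, matE, adjugate_fin_three_of, trace_fin_three]
        exact Or.inl (by ring))
      have := congrFun (congrFun this 1) 1
      simp [matB] at this
  · rintro ⟨h0, h1⟩ A hA h
    obtain ⟨x, y, z, rfl⟩ := hmem A hA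
    have eU := h _ hU
    have eB := h _ hB
    have eE := h _ hE
    -- with `t = x - (1 + α) y`, the discriminant cubic is `2xt² - 8αxy² - 2αyz²`
    have f1 : 2 * (x - (1 + α) * y) ^ 2 + 4 * x * (x - (1 + α) * y) - 8 * α * y ^ 2 = 0 := by
      rw [← eU]
      simp [matU, matB, matE, adjugate_fin_three_of, trace_fin_three]
      ring
    have f2 : -4 * (1 + α) * x * (x - (1 + α) * y) - 16 * α * x * y - 2 * α * z ^ 2 = 0 := by
      rw [← eB]
      simp [matU, matB, matE, adjugate_fin_three_of, trace_fin_three]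
      ring
    have f3 : -4 * α * (y * z) = 0 := by
      rw [← eE]
      simp [matU, matB, matE, adjugate_fin_three_of, trace_fin_three]
      ring
    have hyz : y * z = 0 := by simpa [h0] using f3
    have hy : y = 0 := by
      by_contra hy
      have hz : z = 0 := (mul_eq_zero.1 hyz).resolve_left hy
      subst hz
      have hx : x ≠ 0 := by
        rintro rfl
        have : 2 * ((1 - α) * y) ^ 2 = 0 := by linear_combination f1
        exact hy (by simpa [sub_eq_zero, Ne.symm h1] using this)
      -- Euler's relation
      have e1 : x * ((x - (1 + α) * y) ^ 2 - 4 * α * y ^ 2) = 0 := by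
        linear_combination x / 6 * f1 + y / 6 * f2
      have e2 := (mul_eq_zero.1 e1).resolve_left hx
      have e3 : 4 * x * (x - (1 + α) * y) = 0 := by linear_combination f1 - 2 * e2
      have e4 : x - (1 + α) * y = 0 := by simpa [hx] using e3
      have e5 : 4 * α * y ^ 2 = 0 := by linear_combination (x - (1 + α) * y) * e4 - e2
      exact hy (by simpa [h0] using e5)
    subst hy
    have hx : x = 0 := by
      have : 6 * x ^ 2 = 0 := by linear_combination f1
      simpa using this
    subst hx
    have hz : z = 0 := by
      have : 2 * α * z ^ 2 = 0 := by linear_combination -f2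
      simpa [h0] using this
    subst hz
    simp

end

/-- A net of conics has smooth discriminant if and only if it is equivalent to
`span{YZ − X², (Y − Z)(Y − αZ), XY}` for some `α ≠ 0, 1`. -/
theorem smooth_discriminant_iff (k : Type) [Field k] [IsAlgClosed k] [CharZero k]
    (V : Submodule k (MvPolynomial (Fin 3) k)) (hV : IsNet V) :
    HasSmoothDiscriminant V ↔
      ∃ α : k, α ≠ 0 ∧ α ≠ 1 ∧ Equivalent V (Wnet k α) := by
  have key : ∀ α, Equivalent V (Wnet k α) →
      (HasSmoothDiscriminant V ↔ α ≠ 0 ∧ α ≠ 1) := by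
    rintro α ⟨g, hg, hgV⟩
    rw [hasSmoothDiscriminant_iff hV, ← smoothMat_map_cong hg, ← map_mlin_map_subst hV.1, hgV,
      map_mlin_Wnet, smoothMat_normal_form]
  constructor
  · intro h
    obtain ⟨α, g, hg, H⟩ := (hV.smoothNet ((hasSmoothDiscriminant_iff hV).1 h)).hasNF
    have heq : Equivalent V (Wnet k α) := by
      refine ⟨g, hg, ?_⟩
      have : FiniteDimensional k V := Module.finite_of_finrank_pos (by rw [hV.2]; norm_num)
      have hlift : ∀ q ∈ homogeneousSubmodule (Fin 3) k 2,
          Mmat q ∈ (V.map (mlin k)).map (cong g) → q ∈ V.map (subst g).toLinearMap := by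
        rintro q hq ⟨_, ⟨r, hr, rfl⟩, hrq⟩
        refine ⟨r, hr, ?_⟩
        refine Mmat_injOn (subst_mem g (hV.1 hr)) hq ?_
        rw [AlgHom.toLinearMap_apply, Mmat_subst g (hV.1 hr), ← hrq, mlin_apply]
      obtain ⟨h1, h2, h3⟩ := Mmat_gen α
      rw [← h1, ← h2, ← h3] at H
      obtain ⟨H1, H2, H3⟩ := H
      have hle : Wnet k α ≤ V.map (subst g).toLinearMap := by
        have hmem := Wnet_le α
        rw [Wnet, Submodule.span_le] at hmem ⊢
        rintro q hq
        have hq2 := hmem hq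
        rcases hq with rfl | rfl | rfl
        · exact hlift _ hq2 H1
        · exact hlift _ hq2 H2
        · exact hlift _ hq2 H3
      refine (Submodule.eq_of_le_of_finrank_le hle ?_).symm
      rw [finrank_Wnet]
      exact (Submodule.finrank_map_le _ _).trans hV.2.le
    obtain ⟨h0, h1⟩ := (key α heq).1 h
    exact ⟨α, h0, h1, heq⟩
  · rintro ⟨α, h0, h1, heq⟩
    exact (key α heq).2 ⟨h0, h1⟩

end Conics
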